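/- arXiv:2402.10281 — 2 statements merged into one kernel-verified Lean document; each statement's English description precedes it below -/
import Mathlib

section
/- Fix an integer n ≥ 2 and set h = 1/n and x_i = i·h (i = 0,…,n). Let M_h denote the space of continuous functions v : [0,1] → ℝ with v(0) = v(1) = 0 that are affine on each subinterval [x_{i−1}, x_i]. Let ε > 0 with 2ε < h, set β := (3/4)·(1 − 2ε/h), and define B : [0,h] → ℝ by B(x) = (4β/h²)·x·(h−x). For i = 1,…,n define B_i : [0,1] → ℝ by B_i(x) = B(x − x_{i−1}) for x ∈ [x_{i−1}, x_i] and B_i(x) = 0 otherwise, and set V_h := { w + Σ_{i=1}^n (w(x_i) − w(x_{i−1}))·B_i : w ∈ M_h }. Let f : [0,1] → ℝ be continuous with ‖f‖_∞ := max_{x∈[0,1]} |f(x)|. If u_h ∈ M_h satisfies ε·∫_0^1 u_h′ v′ dx + ∫_0^1 u_h′ v dx = ∫_0^1 f v dx for all v ∈ V_h, then for every j = 1,…,n−1: | u_h(x_j) − ∫_0^{x_j} f(x) dx | ≤ ‖f‖_∞ · (2 − 2ε/h) · h. -/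
/-!
On each element the exact integrals of the bilinear form collapse: if `u` and `w` are affine on
`[x_k, x_{k+1}]` and `v` is the bubble modification of `w`, then the element contribution is
`Δ_k u · (ε/h · Δ_k w + (w(x_k) + w(x_{k+1}))/2 + (2β/3) Δ_k w)`, and the special value of `β`
makes `2β/3 = 1/2 - ε/h`, so this is just `Δ_k u · w(x_{k+1})` (`element_energy`). Summing over
elements gives `∑ Δ_k u · w(x_{k+1}) = ∫ f v` (`galerkin_identity`).

Testing with the trapezoid `w` equal to `1` at the nodes `x_1, …, x_j` and `0` at all others, the
left side telescopes to `u_h(x_j)`. The corresponding `v` equals `1` on `[x_1, x_j]` and `0` beyond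
`x_{j+1}`, so `u_h(x_j) - ∫_0^{x_j} f` only sees the first element and the element
`[x_j, x_{j+1}]`. On each of these two the weight multiplying `f` is bounded in absolute value by a
linear ramp plus the bubble, whose integral is `h/2 + 2βh/3 = h - ε` (`integral_ramp_bubble`).
-/

/-- The space `M_h` of continuous piecewise linear functions on the uniform
mesh `x_i = i/n` of `[0,1]` vanishing at both endpoints. -/
def InMh (n : ℕ) (v : ℝ → ℝ) : Prop :=
  ContinuousOn v (Set.Icc 0 1) ∧ v 0 = 0 ∧ v 1 = 0 ∧
    ∀ i : ℕ, 1 ≤ i → i ≤ n →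
      ∃ a c : ℝ, ∀ x ∈ Set.Icc (((i : ℝ) - 1) / n) ((i : ℝ) / n), v x = a * x + c

/-- The bubble `B_i` supported on `[x_{i-1}, x_i]`, obtained by translating `B`. -/
noncomputable def bubbleI (n : ℕ) (B : ℝ → ℝ) (i : ℕ) : ℝ → ℝ := fun x =>
  if x ∈ Set.Icc (((i : ℝ) - 1) / n) ((i : ℝ) / n) then B (x - ((i : ℝ) - 1) / n) else 0

/-- The bubble modification `w + Σ_{i=1}^n (w(x_i) - w(x_{i-1})) B_i` of `w`. -/
noncomputable def bubbleMod (n : ℕ) (B : ℝ → ℝ) (w : ℝ → ℝ) : ℝ → ℝ := fun x =>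
  w x + ∑ i ∈ Finset.Icc 1 n, (w ((i : ℝ) / n) - w (((i : ℝ) - 1) / n)) * bubbleI n B i x

/-- The quadratic bubble `B(x) = (4β/h²)x(h - x)` on `[0,h]` with `h = 1/n`. -/
noncomputable def quadBubble (n : ℕ) (β : ℝ) : ℝ → ℝ := fun x =>
  (4 * β / (1 / (n : ℝ))^2) * x * ((1 / (n : ℝ)) - x)

open Set MeasureTheory intervalIntegral

/-- Exact integral of a quadratic written around the left endpoint. -/
lemma integral_quadratic (s e a b c : ℝ) :
    ∫ x in s..e, (a + b * (x - s) + c * (x - s) ^ 2) =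
      a * (e - s) + b * (e - s) ^ 2 / 2 + c * (e - s) ^ 3 / 3 := by
  have hd : ∀ x ∈ uIcc s e, HasDerivAt
      (fun x => a * (x - s) + b * (x - s) ^ 2 / 2 + c * (x - s) ^ 3 / 3)
      (a + b * (x - s) + c * (x - s) ^ 2) x := by
    intro x _
    have h1 : HasDerivAt (fun x : ℝ => x - s) 1 x := (hasDerivAt_id x).sub_const s
    convert! ((h1.const_mul a).add (((h1.pow 2).const_mul b).div_const 2)).add
      (((h1.pow 3).const_mul c).div_const 3) using 1
    push_cast
    ring
  rw [integral_eq_sub_of_hasDerivAt hd (Continuous.intervalIntegrable (by fun_prop) _ _)]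
  ring

lemma node_lt (n : ℕ) (hn : 2 ≤ n) (k : ℕ) : (k : ℝ) / n < ((k + 1 : ℕ) : ℝ) / n := by
  have : (0 : ℝ) < n := by positivity
  gcongr
  simp

lemma element_subset (n : ℕ) (hn : 2 ≤ n) (k : ℕ) (hk : k < n) :
    Icc ((k : ℝ) / n) (((k + 1 : ℕ) : ℝ) / n) ⊆ Icc 0 1 := by
  have h0 : (0 : ℝ) < n := by positivity
  refine Icc_subset_Icc (by positivity) ?_
  rw [div_le_one h0]
  exact_mod_cast hk

lemma InMh.affine {n : ℕ} {w : ℝ → ℝ} (hw : InMh n w) (k : ℕ) (hk : k < n) :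
    ∃ p q : ℝ, ∀ x ∈ Icc ((k : ℝ) / n) (((k + 1 : ℕ) : ℝ) / n), w x = p * x + q := by
  obtain ⟨p, q, h⟩ := hw.2.2.2 (k + 1) (by omega) (by omega)
  refine ⟨p, q, fun x hx => h x ?_⟩
  simpa using hx

/-- Inside an element only that element's own bubble is nonzero, so the bubble modification of an
affine function with slope `p` is an explicit quadratic there. -/
lemma bubbleMod_eqOn (n : ℕ) (hn : 2 ≤ n) (β : ℝ) (w : ℝ → ℝ) (k : ℕ) (hk : k < n) (p q : ℝ)
    (hw : ∀ x ∈ Icc ((k : ℝ) / n) (((k + 1 : ℕ) : ℝ) / n), w x = p * x + q) :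
    EqOn (bubbleMod n (quadBubble n β) w)
      (fun x => (p * (k / n) + q) + (p + 4 * β * p) * (x - k / n)
        + (-(4 * β * p * n)) * (x - k / n) ^ 2)
      (Ioo ((k : ℝ) / n) (((k + 1 : ℕ) : ℝ) / n)) := by
  intro x hx
  have h0 : (0 : ℝ) < n := by positivity
  have hlt := node_lt n hn k
  have hsum : ∑ i ∈ Finset.Icc 1 n,
      (w ((i : ℝ) / n) - w (((i : ℝ) - 1) / n)) * bubbleI n (quadBubble n β) i x =
      (w (((k + 1 : ℕ) : ℝ) / n) - w ((k : ℝ) / n)) * quadBubble n β (x - k / n) := by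
    rw [Finset.sum_eq_single (k + 1)]
    · have hm : x ∈ Icc ((((k + 1 : ℕ) : ℝ) - 1) / n) (((k + 1 : ℕ) : ℝ) / n) := by
        have := Ioo_subset_Icc_self hx
        simpa using this
      rw [bubbleI, if_pos hm]
      simp
    · intro i _ hik
      rw [bubbleI, if_neg, mul_zero]
      rintro ⟨h1, h2⟩
      have h3 := h1.trans_lt hx.2
      have h4 := hx.1.trans_le h2
      rw [div_lt_div_iff_of_pos_right h0] at h3 h4
      have h5 : i < k + 2 := by
        have : (i : ℝ) < k + 2 := by push_cast at h3; linarith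
        exact_mod_cast this
      have h6 : k < i := by exact_mod_cast h4
      omega
    · intro h
      exact absurd (Finset.mem_Icc.2 ⟨by omega, by omega⟩) h
  simp only [bubbleMod]
  rw [hsum, hw x (Ioo_subset_Icc_self hx), hw _ (right_mem_Icc.2 hlt.le),
    hw _ (left_mem_Icc.2 hlt.le), quadBubble]
  push_cast
  field_simp
  ring

/-- With `β = (3/4)(1 - 2ε/h)` the element contribution of the bilinear form only involves the
right nodal value of `w`; this is the lower bidiagonal structure of the finite element matrix. -/
lemma element_energy (n : ℕ) (hn : 2 ≤ n) (ε β : ℝ)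
    (hβ : β = (3 / 4) * (1 - 2 * ε * (n : ℝ))) (u w : ℝ → ℝ) (hu : InMh n u) (hw : InMh n w)
    (k : ℕ) (hk : k < n) :
    IntervalIntegrable (fun x => deriv u x * deriv (bubbleMod n (quadBubble n β) w) x) volume
        ((k : ℝ) / n) (((k + 1 : ℕ) : ℝ) / n) ∧
    IntervalIntegrable (fun x => deriv u x * bubbleMod n (quadBubble n β) w x) volume
        ((k : ℝ) / n) (((k + 1 : ℕ) : ℝ) / n) ∧
    ε * (∫ x in ((k : ℝ) / n)..(((k + 1 : ℕ) : ℝ) / n),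
          deriv u x * deriv (bubbleMod n (quadBubble n β) w) x) +
      (∫ x in ((k : ℝ) / n)..(((k + 1 : ℕ) : ℝ) / n),
          deriv u x * bubbleMod n (quadBubble n β) w x) =
      (u (((k + 1 : ℕ) : ℝ) / n) - u ((k : ℝ) / n)) * w (((k + 1 : ℕ) : ℝ) / n) := by
  have h0 : (0 : ℝ) < n := by positivity
  have hlt := node_lt n hn k
  obtain ⟨a, c, hac⟩ := hu.affine k hk
  obtain ⟨p, q, hpq⟩ := hw.affine k hk
  have hv := bubbleMod_eqOn n hn β w k hk p q hpq
  have hdu : ∀ x ∈ Ioo ((k : ℝ) / n) (((k + 1 : ℕ) : ℝ) / n), deriv u x = a := by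
    intro x hx
    have he : u =ᶠ[nhds x] fun x => a * x + c :=
      Filter.eventuallyEq_of_mem (isOpen_Ioo.mem_nhds hx) fun y hy =>
        hac y (Ioo_subset_Icc_self hy)
    rw [he.deriv_eq]
    simp
  have hdv : ∀ x ∈ Ioo ((k : ℝ) / n) (((k + 1 : ℕ) : ℝ) / n),
      deriv (bubbleMod n (quadBubble n β) w) x =
        (p + 4 * β * p) + 2 * (-(4 * β * p * n)) * (x - k / n) := by
    intro x hx
    rw [(Filter.eventuallyEq_of_mem (isOpen_Ioo.mem_nhds hx) hv).deriv_eq]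
    have h1 : HasDerivAt (fun x : ℝ => x - k / n) 1 x := (hasDerivAt_id x).sub_const _
    have h2 := ((h1.const_mul (p + 4 * β * p)).const_add (p * (k / n) + q)).add
      ((h1.pow 2).const_mul (-(4 * β * p * n)))
    refine h2.deriv.trans ?_
    push_cast
    ring
  have e1 : EqOn (fun x => deriv u x * deriv (bubbleMod n (quadBubble n β) w) x)
      (fun x => a * (p + 4 * β * p) + a * (2 * (-(4 * β * p * n))) * (x - k / n)
        + 0 * (x - k / n) ^ 2)
      (uIoo ((k : ℝ) / n) (((k + 1 : ℕ) : ℝ) / n)) := by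
    rw [uIoo_of_le hlt.le]
    intro x hx
    simp only [hdu x hx, hdv x hx]
    ring
  have e2 : EqOn (fun x => deriv u x * bubbleMod n (quadBubble n β) w x)
      (fun x => a * (p * (k / n) + q) + a * (p + 4 * β * p) * (x - k / n)
        + a * (-(4 * β * p * n)) * (x - k / n) ^ 2)
      (uIoo ((k : ℝ) / n) (((k + 1 : ℕ) : ℝ) / n)) := by
    rw [uIoo_of_le hlt.le]
    intro x hx
    simp only [hdu x hx, hv hx]
    ring
  refine ⟨?_, ?_, ?_⟩
  · rw [intervalIntegrable_congr_uIoo e1]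
    exact Continuous.intervalIntegrable (by fun_prop) _ _
  · rw [intervalIntegrable_congr_uIoo e2]
    exact Continuous.intervalIntegrable (by fun_prop) _ _
  · rw [integral_congr_uIoo e1, integral_congr_uIoo e2, integral_quadratic, integral_quadratic,
      hac _ (right_mem_Icc.2 hlt.le), hac _ (left_mem_Icc.2 hlt.le),
      hpq _ (right_mem_Icc.2 hlt.le), hβ]
    push_cast
    field_simp
    ring

/-- An integral over `[0,1]` is the sum of its element contributions. -/
lemma integral_eq_sum_elements (n : ℕ) (hn : 2 ≤ n) (g : ℝ → ℝ)
    (hg : ∀ k < n, IntervalIntegrable g volume ((k : ℝ) / n) (((k + 1 : ℕ) : ℝ) / n)) :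
    ∫ x in (0 : ℝ)..1, g x =
      ∑ k ∈ Finset.range n, ∫ x in ((k : ℝ) / n)..(((k + 1 : ℕ) : ℝ) / n), g x := by
  have h0 : (n : ℝ) ≠ 0 := by positivity
  have := sum_integral_adjacent_intervals (a := fun k : ℕ => (k : ℝ) / n) hg
  simpa [h0] using this.symm

lemma galerkin_identity (n : ℕ) (hn : 2 ≤ n) (ε β : ℝ)
    (hβ : β = (3 / 4) * (1 - 2 * ε * (n : ℝ))) (u w : ℝ → ℝ) (hu : InMh n u) (hw : InMh n w) :
    ε * (∫ x in (0 : ℝ)..1, deriv u x * deriv (bubbleMod n (quadBubble n β) w) x) +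
      (∫ x in (0 : ℝ)..1, deriv u x * bubbleMod n (quadBubble n β) w x) =
    ∑ k ∈ Finset.range n,
      (u (((k + 1 : ℕ) : ℝ) / n) - u ((k : ℝ) / n)) * w (((k + 1 : ℕ) : ℝ) / n) := by
  have H := fun k hk => element_energy n hn ε β hβ u w hu hw k hk
  rw [integral_eq_sum_elements n hn _ fun k hk => (H k hk).1,
    integral_eq_sum_elements n hn _ fun k hk => (H k hk).2.1, Finset.mul_sum,
    ← Finset.sum_add_distrib]
  exact Finset.sum_congr rfl fun k hk => (H k (Finset.mem_range.1 hk)).2.2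

/-- The trapezoid in `M_h` with nodal values `1` at `x_1, …, x_j` and `0` at the other nodes
(for `1 ≤ j ≤ n - 1`). -/
noncomputable def trapezoid (n j : ℕ) : ℝ → ℝ := fun x =>
  max 0 (min 1 (min (n * x) (j + 1 - n * x)))

/-- Slope of the trapezoid on the element `[x_k, x_{k+1}]`. -/
noncomputable def trapSlope (n j k : ℕ) : ℝ := if k = 0 then n else if k = j then -n else 0

/-- Intercept of the affine function that agrees with the trapezoid on `[x_k, x_{k+1}]`. -/
noncomputable def trapConst (j k : ℕ) : ℝ :=
  if k = 0 then 0 else if k < j then 1 else if k = j then j + 1 else 0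

lemma trapezoid_eq (n : ℕ) (hn : 2 ≤ n) (j : ℕ) (hj : 1 ≤ j) (k : ℕ) :
    ∀ x ∈ Icc ((k : ℝ) / n) (((k + 1 : ℕ) : ℝ) / n),
      trapezoid n j x = trapSlope n j k * x + trapConst j k := by
  rintro x ⟨h1, h2⟩
  have h0 : (0 : ℝ) < n := by positivity
  rw [div_le_iff₀ h0] at h1
  rw [le_div_iff₀ h0] at h2
  push_cast at h2
  have hj' : (1 : ℝ) ≤ j := by exact_mod_cast hj
  unfold trapezoid trapSlope trapConst
  rcases Nat.eq_zero_or_pos k with rfl | hk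
  · simp only [if_true]
    push_cast at h1 h2
    rw [min_eq_left (a := (n : ℝ) * x) (by linarith), min_eq_right (by linarith),
      max_eq_right (by linarith)]
    ring
  have hk' : (1 : ℝ) ≤ k := by exact_mod_cast hk
  rw [if_neg hk.ne', if_neg hk.ne']
  rcases lt_trichotomy k j with hkj | hkj | hkj
  · have : (k : ℝ) + 1 ≤ j := by exact_mod_cast hkj
    rw [if_neg hkj.ne, if_pos hkj, min_eq_left (le_min (by linarith) (by linarith)),
      max_eq_right (by norm_num)]
    ring
  · subst hkj
    simp only [if_true, lt_irrefl, if_false]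
    rw [min_eq_right (a := (n : ℝ) * x) (by linarith), min_eq_right (by linarith),
      max_eq_right (by linarith)]
    ring
  · have : (j : ℝ) + 1 ≤ k := by exact_mod_cast hkj
    rw [if_neg hkj.ne', if_neg (by omega), if_neg hkj.ne', max_eq_left]
    · ring
    · exact (min_le_right _ _).trans ((min_le_right _ _).trans (by linarith))

lemma trapezoid_mem (n : ℕ) (hn : 2 ≤ n) (j : ℕ) (hj : 1 ≤ j) (hjn : j < n) :
    InMh n (trapezoid n j) := by
  refine ⟨?_, ?_, ?_, ?_⟩
  · unfold trapezoid
    fun_prop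
  · simp [trapezoid]
  · have : (j : ℝ) + 1 ≤ n := by exact_mod_cast hjn
    exact max_eq_left ((min_le_right _ _).trans ((min_le_right _ _).trans (by linarith)))
  · intro i hi hin
    obtain ⟨k, rfl⟩ : ∃ k, i = k + 1 := ⟨i - 1, by omega⟩
    refine ⟨trapSlope n j k, trapConst j k, fun x hx => trapezoid_eq n hn j hj k x ?_⟩
    simpa using hx

/-- Nodal values of the trapezoid at `x_{k+1}`. -/
lemma trapezoid_node (n : ℕ) (hn : 2 ≤ n) (j k : ℕ) :
    trapezoid n j (((k + 1 : ℕ) : ℝ) / n) = if k < j then 1 else 0 := by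
  have h0 : (n : ℝ) ≠ 0 := by positivity
  unfold trapezoid
  rw [mul_div_cancel₀ _ h0]
  split_ifs with h
  · have : (k : ℝ) + 1 ≤ j := by exact_mod_cast h
    have hk : (0 : ℝ) ≤ k := by positivity
    push_cast
    rw [min_eq_left (le_min (by linarith) (by linarith)), max_eq_right (by norm_num)]
  · have : (j : ℝ) ≤ k := by exact_mod_cast not_lt.1 h
    push_cast
    exact max_eq_left ((min_le_right _ _).trans ((min_le_right _ _).trans (by linarith)))

/-- The weight `1 - t/h + B(t)` on an element (descending ramp plus bubble) integrates to
`h/2 + 2βh/3 = h - ε`. -/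
lemma integral_ramp_bubble (n : ℕ) (hn : 2 ≤ n) (ε β : ℝ)
    (hβ : β = (3 / 4) * (1 - 2 * ε * (n : ℝ))) (k : ℕ) (M : ℝ) :
    ∫ x in ((k : ℝ) / n)..(((k + 1 : ℕ) : ℝ) / n),
      (M + M * (-n + 4 * β * n) * (x - k / n) + M * (-(4 * β * n ^ 2)) * (x - k / n) ^ 2) =
      M * (1 / n - ε) := by
  have h0 : (n : ℝ) ≠ 0 := by positivity
  rw [integral_quadratic, hβ]
  push_cast
  field_simp
  ring

/-- If `|g|` is dominated inside an element by `M` times the ramp plus bubble, then its integral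
over the element is at most `M (h - ε)`. -/
lemma element_bound (n : ℕ) (hn : 2 ≤ n) (ε β : ℝ)
    (hβ : β = (3 / 4) * (1 - 2 * ε * (n : ℝ))) (k : ℕ) (M : ℝ) (g : ℝ → ℝ)
    (hg : ∀ x ∈ Ioo ((k : ℝ) / n) (((k + 1 : ℕ) : ℝ) / n), |g x| ≤
      M * ((1 - n * (x - k / n)) + 4 * β * (n * (x - k / n)) * (1 - n * (x - k / n)))) :
    |∫ x in ((k : ℝ) / n)..(((k + 1 : ℕ) : ℝ) / n), g x| ≤ M * (1 / n - ε) := by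
  rw [← integral_ramp_bubble n hn ε β hβ k M, ← Real.norm_eq_abs]
  refine norm_integral_le_of_norm_le (node_lt n hn k).le ?_ ?_
  swap
  · exact Continuous.intervalIntegrable (by fun_prop) _ _
  -- The right endpoint is a null set, so the bound on the open element suffices.
  have hne : ∀ᵐ x : ℝ, x ≠ ((k + 1 : ℕ) : ℝ) / n := by
    simp [ae_iff]
  filter_upwards [hne] with x hx hm
  refine (hg x ⟨hm.1, lt_of_le_of_ne hm.2 hx⟩).trans (le_of_eq ?_)
  ring

/-- For the quadratic bubble UPG method with the special
parameter `β = (3/4)(1 - 2ε/h)` (where `2ε < h`), the nodal values of the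
discrete solution satisfy `|u_h(x_j) - ∫_0^{x_j} f| ≤ ‖f‖_∞ (2 - 2ε/h) h` for
`j = 1, …, n-1`; hence `u_h` is free of non-physical oscillations. -/
theorem stmt17 (n : ℕ) (hn : 2 ≤ n)
    (ε : ℝ) (hε : 0 < ε) (hεh : 2 * ε < 1 / (n : ℝ))
    (β : ℝ) (hβ : β = (3 / 4) * (1 - 2 * ε * (n : ℝ)))
    (f : ℝ → ℝ) (hf : ContinuousOn f (Set.Icc 0 1))
    (fmax : ℝ) (hfmax : fmax = sSup ((fun x => |f x|) '' Set.Icc (0:ℝ) 1))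
    (uh : ℝ → ℝ) (huh : InMh n uh)
    (hupg : ∀ v : ℝ → ℝ,
      (∃ w : ℝ → ℝ, InMh n w ∧ v = bubbleMod n (quadBubble n β) w) →
      ε * (∫ x in (0:ℝ)..1, deriv uh x * deriv v x) +
        (∫ x in (0:ℝ)..1, deriv uh x * v x) = ∫ x in (0:ℝ)..1, f x * v x) :
    ∀ j : ℕ, 1 ≤ j → j ≤ n - 1 →
      |uh ((j : ℝ) / n) - ∫ x in (0:ℝ)..((j : ℝ) / n), f x| ≤
        fmax * (2 - 2 * ε * (n : ℝ)) * (1 / (n : ℝ)) := by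
  intro j hj hjn'
  have hjn : j < n := by omega
  have h0 : (0 : ℝ) < n := by positivity
  have hβ0 : 0 ≤ β := by
    rw [lt_div_iff₀ h0] at hεh
    rw [hβ]
    linarith
  have hfb : ∀ x ∈ Icc (0 : ℝ) 1, |f x| ≤ fmax := by
    intro x hx
    rw [hfmax]
    exact le_csSup (isCompact_Icc.image_of_continuousOn hf.abs).bddAbove ⟨x, hx, rfl⟩
  have hw := trapezoid_mem n hn j hj hjn
  set v := bubbleMod n (quadBubble n β) (trapezoid n j) with hvdef
  have hv := fun k (hk : k < n) =>
    bubbleMod_eqOn n hn β (trapezoid n j) k hk _ _ (trapezoid_eq n hn j hj k)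
  have hfe : ∀ k < n, ContinuousOn f (uIcc ((k : ℝ) / n) (((k + 1 : ℕ) : ℝ) / n)) := by
    intro k hk
    rw [uIcc_of_le (node_lt n hn k).le]
    exact hf.mono (element_subset n hn k hk)
  have hfi : ∀ k < n, IntervalIntegrable f volume ((k : ℝ) / n) (((k + 1 : ℕ) : ℝ) / n) :=
    fun k hk => (hfe k hk).intervalIntegrable
  have hfvi : ∀ k < n, IntervalIntegrable (fun x => f x * v x) volume
      ((k : ℝ) / n) (((k + 1 : ℕ) : ℝ) / n) := by
    intro k hk
    have e : EqOn (fun x => f x * v x)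
        (fun x => f x * (trapSlope n j k * (k / n) + trapConst j k +
          (trapSlope n j k + 4 * β * trapSlope n j k) * (x - k / n) +
          (-(4 * β * trapSlope n j k * n)) * (x - k / n) ^ 2))
        (uIoo ((k : ℝ) / n) (((k + 1 : ℕ) : ℝ) / n)) := by
      rw [uIoo_of_le (node_lt n hn k).le]
      exact fun x hx => congrArg (f x * ·) (hv k hk hx)
    rw [intervalIntegrable_congr_uIoo e]
    exact ((hfe k hk).mul (Continuous.continuousOn (by fun_prop))).intervalIntegrable
  -- The left side of the Galerkin equation telescopes to `u_h(x_j)`.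
  have htel : ∑ k ∈ Finset.range n, (uh (((k + 1 : ℕ) : ℝ) / n) - uh ((k : ℝ) / n)) *
      trapezoid n j (((k + 1 : ℕ) : ℝ) / n) = uh ((j : ℝ) / n) := by
    simp only [trapezoid_node n hn j, mul_ite, mul_one, mul_zero]
    rw [← Finset.sum_filter]
    have : (Finset.range n).filter (fun k => k < j) = Finset.range j := by
      ext k
      simp only [Finset.mem_filter, Finset.mem_range]
      omega
    rw [this, Finset.sum_range_sub (fun k : ℕ => uh ((k : ℝ) / n))]
    simp [huh.2.1]
  have hgal : uh ((j : ℝ) / n) = ∫ x in (0 : ℝ)..1, f x * v x := by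
    rw [← hupg v ⟨_, hw, hvdef⟩, hvdef, galerkin_identity n hn ε β hβ uh _ huh hw, htel]
  have hfj : ∫ x in (0 : ℝ)..((j : ℝ) / n), f x = ∑ k ∈ Finset.range n,
      if k < j then ∫ x in ((k : ℝ) / n)..(((k + 1 : ℕ) : ℝ) / n), f x else 0 := by
    have := sum_integral_adjacent_intervals (a := fun k : ℕ => (k : ℝ) / n) (n := j)
      fun k hk => hfi k (hk.trans hjn)
    rw [← Finset.sum_filter]
    have hr : (Finset.range n).filter (fun k => k < j) = Finset.range j := by
      ext k
      simp only [Finset.mem_filter, Finset.mem_range]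
      omega
    rw [hr, this]
    simp
  rw [hgal, hfj, integral_eq_sum_elements n hn _ hfvi, ← Finset.sum_sub_distrib]
  have hbound : ∀ k ∈ Finset.range n,
      |(∫ x in ((k : ℝ) / n)..(((k + 1 : ℕ) : ℝ) / n), f x * v x) -
        (if k < j then ∫ x in ((k : ℝ) / n)..(((k + 1 : ℕ) : ℝ) / n), f x else 0)| ≤
      (if k = 0 then fmax * (1 / n - ε) else 0) + (if k = j then fmax * (1 / n - ε) else 0) := by
    intro k hk
    rw [Finset.mem_range] at hk
    have hloc : ∀ x ∈ Ioo ((k : ℝ) / n) (((k + 1 : ℕ) : ℝ) / n),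
        |f x| ≤ fmax ∧ 0 ≤ n * (x - k / n) ∧ n * (x - k / n) ≤ 1 := by
      intro x hx
      have hx' := Ioo_subset_Icc_self hx
      refine ⟨hfb x (element_subset n hn k hk hx'), mul_nonneg h0.le (by linarith [hx.1]), ?_⟩
      have h2 := hx'.2
      rw [le_div_iff₀ h0] at h2
      push_cast at h2
      have : (n : ℝ) * (x - k / n) = x * n - k := by field_simp
      linarith
    rcases Nat.eq_zero_or_pos k with hk0 | hk0
    · -- First element: `v - 1 = -(1 - t/h) + B(t)`.
      have hkj : k < j := by omega
      rw [if_pos hkj, if_pos hk0, if_neg hkj.ne, add_zero, ← integral_sub (hfvi k hk) (hfi k hk)]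
      refine element_bound n hn ε β hβ k fmax _ fun x hx => ?_
      obtain ⟨h1, h2, h3⟩ := hloc x hx
      have hvx : v x = n * (x - k / n) +
          4 * β * (n * (x - k / n)) * (1 - n * (x - k / n)) := by
        refine (hv k hk hx).trans ?_
        simp only [trapSlope, trapConst, hk0, if_true]
        push_cast
        ring
      set t := (n : ℝ) * (x - k / n)
      have hB : 0 ≤ 4 * β * t * (1 - t) := mul_nonneg (by positivity) (by linarith)
      rw [show f x * v x - f x = f x * (v x - 1) by ring, abs_mul]
      refine mul_le_mul h1 ?_ (abs_nonneg _) ((abs_nonneg _).trans h1)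
      rw [hvx, abs_le]
      constructor <;> linarith
    rw [if_neg hk0.ne', zero_add]
    rcases lt_trichotomy k j with hkj | hkj | hkj
    · -- Between `x_1` and `x_j`: `v = 1`.
      rw [if_pos hkj, if_neg hkj.ne, ← integral_sub (hfvi k hk) (hfi k hk)]
      have e : EqOn (fun x => f x * v x - f x) (fun _ => 0)
          (uIoo ((k : ℝ) / n) (((k + 1 : ℕ) : ℝ) / n)) := by
        rw [uIoo_of_le (node_lt n hn k).le]
        intro x hx
        have hvx : v x = 1 := by
          refine (hv k hk hx).trans ?_
          simp [trapSlope, trapConst, hk0.ne', hkj, hkj.ne]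
        simp [hvx]
      rw [integral_congr_uIoo e]
      simp
    · -- The element to the right of `x_j`: `v = (1 - t/h) - B(t)`.
      rw [if_neg (by omega), if_pos hkj, sub_zero]
      refine element_bound n hn ε β hβ k fmax _ fun x hx => ?_
      obtain ⟨h1, h2, h3⟩ := hloc x hx
      have hvx : v x = (1 - n * (x - k / n)) -
          4 * β * (n * (x - k / n)) * (1 - n * (x - k / n)) := by
        refine (hv k hk hx).trans ?_
        have hj0 : j ≠ 0 := by omega
        simp only [trapSlope, trapConst, hkj, hj0, if_true, if_false, lt_irrefl]
        field_simp
        ring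
      set t := (n : ℝ) * (x - k / n)
      have hB : 0 ≤ 4 * β * t * (1 - t) := mul_nonneg (by positivity) (by linarith)
      rw [abs_mul]
      refine mul_le_mul h1 ?_ (abs_nonneg _) ((abs_nonneg _).trans h1)
      rw [hvx, abs_le]
      constructor <;> linarith
    · -- Beyond `x_{j+1}`: `v = 0`.
      rw [if_neg (by omega), if_neg hkj.ne', sub_zero]
      have e : EqOn (fun x => f x * v x) (fun _ => 0)
          (uIoo ((k : ℝ) / n) (((k + 1 : ℕ) : ℝ) / n)) := by
        rw [uIoo_of_le (node_lt n hn k).le]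
        intro x hx
        have hvx : v x = 0 := by
          refine (hv k hk hx).trans ?_
          simp [trapSlope, trapConst, hk0.ne', hkj.ne', not_lt.2 hkj.le]
        simp [hvx]
      rw [integral_congr_uIoo e]
      simp
  refine (Finset.abs_sum_le_sum_abs _ _).trans ((Finset.sum_le_sum hbound).trans (le_of_eq ?_))
  rw [Finset.sum_add_distrib, Finset.sum_ite_eq', Finset.sum_ite_eq',
    if_pos (Finset.mem_range.2 (by omega)), if_pos (Finset.mem_range.2 hjn)]
  field_simp
  ring
end

section
/- Fix an integer n ≥ 2 and set h = 1/n and x_i = i·h (i = 0,…,n). Let M_h denote the space of continuous functions v : [0,1] → ℝ with v(0) = v(1) = 0 that are affine on each subinterval [x_{i−1}, x_i]. Let ε > 0, set g₀ := tanh(h/(2ε)), and define B : [0,h] → ℝ by B(x) = ((1 + g₀)/(2·g₀))·(1 − e^{−x/ε}) − x/h. For i = 1,…,n define B_i : [0,1] → ℝ by B_i(x) = B(x − x_{i−1}) for x ∈ [x_{i−1}, x_i] and B_i(x) = 0 otherwise, and set V_h := { w + Σ_{i=1}^n (w(x_i) − w(x_{i−1}))·B_i : w ∈ M_h }. For an integrable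 w set σ(w)² := (1/n)·Σ_{i=1}^n ( (1/h)·∫_{x_{i−1}}^{x_i} w(x) dx )² − ( ∫_0^1 w(x) dx )². Let f : [0,1] → ℝ be continuous and let u ∈ C²([0,1]) satisfy −ε·u″(x) + u′(x) = f(x) for all x ∈ [0,1] with u(0) = u(1) = 0. If u_h ∈ M_h satisfies ε·∫_0^1 u_h′ v′ dx + ∫_0^1 u_h′ v dx = ∫_0^1 f v dx for all v ∈ V_h, then for every p_h ∈ M_h: h²·∫_0^1 ((u−u_h)′)² dx + 4·g₀²·σ(u−u_h)² ≤ (h/(2·ε·g₀))·( h²·∫_0^1 ((u−p_h)′)² dx + 4·g₀²·σ(u−p_h)² ). -/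
/-- The exponential bubble `B(x) = ((1+g₀)/(2g₀))(1 - e^{-x/ε}) - x/h` on `[0,h]`
with `h = 1/n` and `g₀ = tanh(h/(2ε))`. -/
noncomputable def expBubble (n : ℕ) (ε : ℝ) : ℝ → ℝ := fun x =>
  ((1 + Real.tanh ((1 / (n : ℝ)) / (2 * ε))) /
      (2 * Real.tanh ((1 / (n : ℝ)) / (2 * ε)))) *
    (1 - Real.exp (-x / ε)) - x / (1 / (n : ℝ))

/-- The square of the discrete seminorm `|u|_{*,h} = |P_h T u|`. -/
noncomputable def sigmaSq (n : ℕ) (w : ℝ → ℝ) : ℝ :=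
  (1 / (n : ℝ)) * ∑ i ∈ Finset.range n,
      ((n : ℝ) * ∫ x in ((i : ℝ) / n)..(((i : ℝ) + 1) / n), w x) ^ 2
    - (∫ x in (0:ℝ)..1, w x) ^ 2

open Set MeasureTheory

/-! ### The hyperbolic tangent -/

/-- The difference of the two sides has derivative `tanh t ^ 4`. -/
lemma tanh_add_cube_le {t : ℝ} (ht : 0 ≤ t) :
    Real.tanh t + Real.tanh t ^ 3 / 3 ≤ t := by
  have hd : ∀ x : ℝ, HasDerivAt (fun x => x - (Real.tanh x + Real.tanh x ^ 3 / 3))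
      (Real.tanh x ^ 4) x := by
    intro x
    have hc : Real.cosh x ≠ 0 := (Real.cosh_pos x).ne'
    have h1 : HasDerivAt Real.tanh (1 - Real.tanh x ^ 2) x := by
      have h := (Real.hasDerivAt_sinh x).div (Real.hasDerivAt_cosh x) hc
      have e : Real.tanh = Real.sinh / Real.cosh := by
        funext y; simp [Real.tanh_eq_sinh_div_cosh]
      rw [e]
      refine h.congr_deriv ?_
      simp only [Pi.div_apply]
      field_simp
    have h2 := (hasDerivAt_id x).sub (h1.add ((h1.pow 3).div_const 3))
    refine h2.congr_deriv ?_
    norm_num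
    ring
  have hm : Monotone (fun x : ℝ => x - (Real.tanh x + Real.tanh x ^ 3 / 3)) :=
    monotone_of_deriv_nonneg (fun x => (hd x).differentiableAt)
      (fun x => by rw [(hd x).deriv]; positivity)
  have := hm ht
  simp at this
  linarith

/-- For `t = h / (2ε)` this says that the bubble coefficient is `1 / (1 - exp (-h / ε))`, so that
the bubble vanishes at the right end of its element. -/
lemma bubble_coeff_mul {t : ℝ} (ht : 0 < t) :
    (1 + Real.tanh t) / (2 * Real.tanh t) * (1 - Real.exp (-(2 * t))) = 1 := by
  have hE : Real.exp (-(2 * t)) = Real.exp (-t) * Real.exp (-t) := by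
    rw [← Real.exp_add]; ring_nf
  have hE' : Real.exp t * Real.exp (-t) = 1 := by rw [← Real.exp_add]; simp
  have hlt : Real.exp (-t) < Real.exp t := Real.exp_lt_exp.2 (by linarith)
  have hp := Real.exp_pos (-t)
  have hp' := Real.exp_pos t
  rw [Real.tanh_eq, hE]
  have h1 : Real.exp t - Real.exp (-t) ≠ 0 := by linarith
  have h2 : Real.exp t + Real.exp (-t) ≠ 0 := by positivity
  field_simp
  linear_combination (-2 * Real.exp (-t)) * hE'

lemma half_lt_bubble_coeff {g : ℝ} (hg : 0 < g) : 1 / 2 < (1 + g) / (2 * g) := by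
  rw [div_lt_div_iff₀ (by norm_num) (by positivity)]
  linarith

/-! ### Estimates on a single element -/

/-- Since `ε v' + v = w₀ + D` for `v = w₀ + D (1 - exp (-(x - a) / ε))`, integration by parts
leaves only boundary terms. -/
lemma element_rhs {a b ε w₀ D : ℝ} (hab : a ≤ b) (hε : ε ≠ 0) {u u' u'' : ℝ → ℝ}
    (hu : ContinuousOn u (Icc a b)) (hu' : ContinuousOn u' (Icc a b))
    (hu'' : ContinuousOn u'' (Icc a b))
    (hd : ∀ x ∈ Ioo a b, HasDerivAt u (u' x) x) (hd' : ∀ x ∈ Ioo a b, HasDerivAt u' (u'' x) x) :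
    ∫ x in a..b, (-ε * u'' x + u' x) * (w₀ + D * (1 - Real.exp (-(x - a) / ε))) =
      -ε * (u' b * (w₀ + D * (1 - Real.exp (-(b - a) / ε))) - u' a * w₀)
        + (w₀ + D) * (u b - u a) := by
  have hint : IntervalIntegrable
      (fun x => (-ε * u'' x + u' x) * (w₀ + D * (1 - Real.exp (-(x - a) / ε)))) volume a b := by
    apply ContinuousOn.intervalIntegrable
    rw [uIcc_of_le hab]
    fun_prop
  rw [intervalIntegral.integral_eq_sub_of_hasDerivAt_of_le
    (f := fun x => -ε * (u' x * (w₀ + D * (1 - Real.exp (-(x - a) / ε)))) + (w₀ + D) * u x)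
    hab (by fun_prop) _ hint]
  · simp; ring
  · intro x hx
    have hv : HasDerivAt (fun x => w₀ + D * (1 - Real.exp (-(x - a) / ε)))
        (D / ε * Real.exp (-(x - a) / ε)) x := by
      have h0 : HasDerivAt (fun x : ℝ => -(x - a) / ε) (-1 / ε) x :=
        (((hasDerivAt_id x).sub_const a).neg).div_const ε
      refine (((h0.exp.const_sub 1).const_mul D).const_add w₀).congr_deriv ?_
      ring
    refine ((((hd' x hx).mul hv).const_mul (-ε)).add
      ((hd x hx).const_mul (w₀ + D))).congr_deriv ?_
    field_simp
    ring

lemma element_lhs {a b ε w₀ D α : ℝ} (hε : ε ≠ 0) :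
    ε * (∫ x in a..b, α * (D / ε * Real.exp (-(x - a) / ε)))
      + (∫ x in a..b, α * (w₀ + D * (1 - Real.exp (-(x - a) / ε)))) =
      (w₀ + D) * (α * (b - a)) := by
  rw [← intervalIntegral.integral_const_mul, ← intervalIntegral.integral_add]
  · have : ∀ x, ε * (α * (D / ε * Real.exp (-(x - a) / ε)))
        + α * (w₀ + D * (1 - Real.exp (-(x - a) / ε))) = α * (w₀ + D) := by
      intro x; field_simp; ring
    simp_rw [this]
    simp; ring
  · exact Continuous.intervalIntegrable (by fun_prop) _ _
  · exact Continuous.intervalIntegrable (by fun_prop) _ _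

/-- The mean `α` of `g` is its best constant approximation in `L²`. -/
lemma element_best_approx {a b α β : ℝ} (hab : a ≤ b) {g : ℝ → ℝ} (hg : ContinuousOn g (Icc a b))
    (hα : ∫ x in a..b, g x = α * (b - a)) :
    ∫ x in a..b, (g x - α) ^ 2 ≤ ∫ x in a..b, (g x - β) ^ 2 := by
  have hi : ∀ F : ℝ → ℝ, ContinuousOn F (Icc a b) → IntervalIntegrable F volume a b := by
    intro F hF
    apply ContinuousOn.intervalIntegrable
    rwa [uIcc_of_le hab]
  have h1 : ∫ x in a..b, (g x - β) ^ 2 =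
      (∫ x in a..b, (g x - α) ^ 2) + (∫ x in a..b, (2 * (α - β)) * g x)
        + ∫ x in a..b, (β ^ 2 - α ^ 2) := by
    rw [← intervalIntegral.integral_add, ← intervalIntegral.integral_add]
    · congr 1; funext x; ring
    all_goals exact hi _ (by fun_prop)
  rw [h1, intervalIntegral.integral_const_mul, hα, intervalIntegral.integral_const, smul_eq_mul]
  nlinarith [mul_nonneg (sub_nonneg.2 hab) (sq_nonneg (α - β))]

/-- With `m` the midpoint, `∫ e = -∫ (x - m) e'` because `e` vanishes at both ends; the constant
`1/12` is `∫ (x - m)² / (b - a)³` in the Cauchy–Schwarz inequality. -/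
lemma element_mean_sq_le {a b : ℝ} (hab : a < b) {e g : ℝ → ℝ}
    (he : ContinuousOn e (Icc a b)) (hg : ContinuousOn g (Icc a b))
    (hd : ∀ x ∈ Ioo a b, HasDerivAt e (g x) x) (ha : e a = 0) (hb : e b = 0) :
    (∫ x in a..b, e x) ^ 2 ≤ (b - a) ^ 3 / 12 * ∫ x in a..b, g x ^ 2 := by
  have hi : ∀ F : ℝ → ℝ, ContinuousOn F (Icc a b) → IntervalIntegrable F volume a b := by
    intro F hF
    apply ContinuousOn.intervalIntegrable
    rwa [uIcc_of_le hab.le]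
  set m := (a + b) / 2 with hm
  have h1 : (∫ x in a..b, e x) + ∫ x in a..b, (x - m) * g x = 0 := by
    rw [← intervalIntegral.integral_add (hi _ he) (hi _ (by fun_prop))]
    rw [intervalIntegral.integral_eq_sub_of_hasDerivAt_of_le (f := fun x => (x - m) * e x)
      hab.le (by fun_prop) _ (hi _ (by fun_prop))]
    · simp [ha, hb]
    · intro x hx
      refine (((hasDerivAt_id x).sub_const m).mul (hd x hx)).congr_deriv ?_
      simp
  have h2 : ∫ x in a..b, (x - m) ^ 2 = (b - a) ^ 3 / 12 := by
    rw [intervalIntegral.integral_comp_sub_right (fun x => x ^ 2), integral_pow, hm]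
    norm_num
    ring
  set J := ∫ x in a..b, (x - m) * g x with hJ
  set I := ∫ x in a..b, g x ^ 2 with hI
  have h3 : ∀ l : ℝ, 0 ≤ I + (2 * l) * J + l ^ 2 * ((b - a) ^ 3 / 12) := by
    intro l
    have : I + (2 * l) * J + l ^ 2 * ((b - a) ^ 3 / 12) =
        ∫ x in a..b, (g x + l * (x - m)) ^ 2 := by
      rw [← h2, hI, hJ, ← intervalIntegral.integral_const_mul,
        ← intervalIntegral.integral_const_mul,
        ← intervalIntegral.integral_add, ← intervalIntegral.integral_add]
      · congr 1; funext x; ring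
      all_goals exact hi _ (by fun_prop)
    rw [this]
    exact intervalIntegral.integral_nonneg hab.le (fun x _ => sq_nonneg _)
  have hc : 0 < (b - a) ^ 3 / 12 := by
    have := sub_pos.2 hab
    positivity
  have h4 : (∫ x in a..b, e x) ^ 2 = J ^ 2 := by
    rw [eq_neg_of_add_eq_zero_left h1]; ring
  rw [h4]
  generalize (b - a) ^ 3 / 12 = c at *
  -- `l = -J / c` minimises the quadratic polynomial of `h3`
  have h5 := h3 (-J / c)
  have h6 : I + 2 * (-J / c) * J + (-J / c) ^ 2 * c = (c * I - J ^ 2) / c := by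
    field_simp; ring
  rw [h6] at h5
  have := mul_nonneg h5 hc.le
  rw [div_mul_cancel₀ _ hc.ne'] at this
  linarith

/-! ### The uniform mesh -/

lemma mesh_lt {n : ℕ} (hn : 0 < n) (i : ℕ) : (i : ℝ) / n < ((i : ℝ) + 1) / n := by
  have : (0 : ℝ) < n := by exact_mod_cast hn
  exact (div_lt_div_iff_of_pos_right this).2 (by linarith)

lemma mesh_length {n : ℕ} (i : ℕ) : ((i : ℝ) + 1) / n - (i : ℝ) / n = 1 / n := by
  ring

lemma mesh_subset {n i : ℕ} (hi : i < n) :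
    Icc ((i : ℝ) / n) (((i : ℝ) + 1) / n) ⊆ Icc 0 1 := by
  have hn : (0 : ℝ) < n := by exact_mod_cast (Nat.zero_le i).trans_lt hi
  have hi' : (i : ℝ) + 1 ≤ n := by exact_mod_cast hi
  apply Icc_subset_Icc
  · positivity
  · rwa [div_le_one hn]

lemma mesh_Ioo_subset {n i : ℕ} (hi : i < n) :
    Ioo ((i : ℝ) / n) (((i : ℝ) + 1) / n) ⊆ Ioo 0 1 := by
  have hn : (0 : ℝ) < n := by exact_mod_cast (Nat.zero_le i).trans_lt hi
  have hi' : (i : ℝ) + 1 ≤ n := by exact_mod_cast hi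
  apply Ioo_subset_Ioo
  · positivity
  · rwa [div_le_one hn]

/-- The integral over `[0, 1]` of a function that agrees inside each element with a continuous
function is the sum of the element integrals; the values at the nodes do not matter. -/
lemma integral_eq_sum_mesh {n : ℕ} (hn : 0 < n) (F : ℝ → ℝ) (G : ℕ → ℝ → ℝ)
    (hG : ∀ i < n, ContinuousOn (G i) (Icc ((i : ℝ) / n) (((i : ℝ) + 1) / n)))
    (hFG : ∀ i < n, ∀ x ∈ Ioo ((i : ℝ) / n) (((i : ℝ) + 1) / n), F x = G i x) :
    ∫ x in (0 : ℝ)..1, F x =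
      ∑ i ∈ Finset.range n, ∫ x in ((i : ℝ) / n)..(((i : ℝ) + 1) / n), G i x := by
  have hint : ∀ k < n, IntervalIntegrable F volume ((k : ℝ) / n) (((k + 1 : ℕ) : ℝ) / n) := by
    intro k hk
    push_cast
    have h : IntervalIntegrable (G k) volume ((k : ℝ) / n) (((k : ℝ) + 1) / n) := by
      apply ContinuousOn.intervalIntegrable
      rw [uIcc_of_le (mesh_lt hn k).le]
      exact hG k hk
    refine h.congr_uIoo ?_
    rw [uIoo_of_le (mesh_lt hn k).le]
    exact fun x hx => (hFG k hk x hx).symm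
  have hn' : (n : ℝ) ≠ 0 := by exact_mod_cast hn.ne'
  have h := intervalIntegral.sum_integral_adjacent_intervals
    (a := fun k : ℕ => (k : ℝ) / n) hint
  simp only [Nat.cast_zero, zero_div, div_self hn'] at h
  rw [← h]
  refine Finset.sum_congr rfl fun i hi => ?_
  push_cast
  exact intervalIntegral.integral_congr_Ioo_of_le (mesh_lt hn i).le
    (hFG i (Finset.mem_range.1 hi))

/-! ### Piecewise linear functions -/

/-- The slope of `v` on the element `[i/n, (i+1)/n]`. -/
noncomputable def meshSlope (n : ℕ) (v : ℝ → ℝ) (i : ℕ) : ℝ :=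
  (v (((i : ℝ) + 1) / n) - v ((i : ℝ) / n)) * n

lemma meshSlope_mul {n : ℕ} (hn : 0 < n) (v : ℝ → ℝ) (i : ℕ) :
    meshSlope n v i * (1 / n) = v (((i : ℝ) + 1) / n) - v ((i : ℝ) / n) := by
  have hn' : (n : ℝ) ≠ 0 := by exact_mod_cast hn.ne'
  unfold meshSlope
  field_simp

lemma InMh.eq_affine {n : ℕ} {v : ℝ → ℝ} (hv : InMh n v) {i : ℕ} (hi : i < n) :
    ∀ x ∈ Icc ((i : ℝ) / n) (((i : ℝ) + 1) / n),
      v x = v ((i : ℝ) / n) + meshSlope n v i * (x - (i : ℝ) / n) := by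
  have hn : 0 < n := by omega
  have hn' : (n : ℝ) ≠ 0 := by exact_mod_cast hn.ne'
  obtain ⟨a, c, h⟩ := hv.2.2.2 (i + 1) (by omega) (by omega)
  push_cast at h
  rw [add_sub_cancel_right] at h
  have hlt := mesh_lt hn i
  intro x hx
  unfold meshSlope
  rw [h x hx, h _ (left_mem_Icc.2 hlt.le), h _ (right_mem_Icc.2 hlt.le)]
  field_simp
  ring

lemma InMh.hasDerivAt {n : ℕ} {v : ℝ → ℝ} (hv : InMh n v) {i : ℕ} (hi : i < n) :
    ∀ x ∈ Ioo ((i : ℝ) / n) (((i : ℝ) + 1) / n), HasDerivAt v (meshSlope n v i) x := by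
  intro x hx
  have h : HasDerivAt (fun y => v ((i : ℝ) / n) + meshSlope n v i * (y - (i : ℝ) / n))
      (meshSlope n v i) x := by
    simpa using (((hasDerivAt_id x).sub_const ((i : ℝ) / n)).const_mul
      (meshSlope n v i)).const_add (v ((i : ℝ) / n))
  refine h.congr_of_eventuallyEq ?_
  filter_upwards [isOpen_Ioo.mem_nhds hx] with y hy
  exact hv.eq_affine hi y (Ioo_subset_Icc_self hy)

/-- The piecewise linear function on the mesh with value `y i` at `i/n` when `y 0 = 0`: on the
`k`-th element the `k`-th ramp climbs from `0` to `1`. -/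
noncomputable def meshInterp (n : ℕ) (y : ℕ → ℝ) (x : ℝ) : ℝ :=
  ∑ k ∈ Finset.range n, (y (k + 1) - y k) * max 0 (min 1 (n * x - k))

lemma meshInterp_eq {n : ℕ} {y : ℕ → ℝ} (hy : y 0 = 0) {i : ℕ} (hi : i < n) :
    ∀ x ∈ Icc ((i : ℝ) / n) (((i : ℝ) + 1) / n),
      meshInterp n y x = y i + (y (i + 1) - y i) * (n * x - i) := by
  intro x hx
  have hn : (0 : ℝ) < n := by exact_mod_cast (Nat.zero_le i).trans_lt hi
  have h1 : (i : ℝ) ≤ n * x := by have := (div_le_iff₀ hn).1 hx.1; linarith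
  have h2 : n * x ≤ (i : ℝ) + 1 := by have := (le_div_iff₀ hn).1 hx.2; linarith
  have hz : ∀ k, i + 1 ≤ k → max 0 (min 1 ((n : ℝ) * x - k)) = 0 := by
    intro k hk
    have : (i : ℝ) + 1 ≤ k := by exact_mod_cast hk
    exact max_eq_left ((min_le_right _ _).trans (by linarith))
  have ho : ∀ k, k < i → max 0 (min 1 ((n : ℝ) * x - k)) = 1 := by
    intro k hk
    have : (k : ℝ) + 1 ≤ i := by exact_mod_cast hk
    rw [min_eq_left (by linarith), max_eq_right zero_le_one]
  unfold meshInterp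
  rw [← Finset.sum_range_add_sum_Ico _ (show i + 1 ≤ n from hi), Finset.sum_range_succ,
    Finset.sum_eq_zero (s := Finset.Ico (i + 1) n), Finset.sum_congr rfl
      (g := fun k => y (k + 1) - y k), Finset.sum_range_sub, hy]
  · rw [min_eq_right (by linarith), max_eq_right (by linarith)]; ring
  · intro k hk; rw [ho k (Finset.mem_range.1 hk), mul_one]
  · intro k hk; rw [hz k (Finset.mem_Ico.1 hk).1, mul_zero]

lemma meshInterp_node {n : ℕ} {y : ℕ → ℝ} (hy : y 0 = 0) (hn : 0 < n) {i : ℕ} (hi : i ≤ n) :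
    meshInterp n y ((i : ℝ) / n) = y i := by
  have hn' : (n : ℝ) ≠ 0 := by exact_mod_cast hn.ne'
  rcases hi.lt_or_eq with h | h
  · rw [meshInterp_eq hy h _ (left_mem_Icc.2 (mesh_lt hn i).le)]
    field_simp; ring
  · obtain ⟨j, rfl⟩ : ∃ j, i = j + 1 := ⟨i - 1, by omega⟩
    have := meshInterp_eq hy (show j < n by omega) _ (right_mem_Icc.2 (mesh_lt hn j).le)
    push_cast
    rw [this]
    field_simp; ring

lemma meshInterp_inMh {n : ℕ} (hn : 0 < n) {y : ℕ → ℝ} (hy : y 0 = 0) (hyn : y n = 0) :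
    InMh n (meshInterp n y) := by
  have hn' : (n : ℝ) ≠ 0 := by exact_mod_cast hn.ne'
  refine ⟨?_, ?_, ?_, ?_⟩
  · apply Continuous.continuousOn
    unfold meshInterp
    fun_prop
  · simpa [hy] using meshInterp_node hy hn (Nat.zero_le n)
  · simpa [hyn, hn'] using meshInterp_node hy hn le_rfl
  · intro i h1 h2
    obtain ⟨j, rfl⟩ : ∃ j, i = j + 1 := ⟨i - 1, by omega⟩
    refine ⟨(y (j + 1) - y j) * n, y j - (y (j + 1) - y j) * j, fun x hx => ?_⟩
    push_cast at hx
    rw [add_sub_cancel_right] at hx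
    rw [meshInterp_eq hy (show j < n by omega) x hx]
    ring

/-! ### The test functions -/

/-- The linear part of the bubble cancels the slope of `w`, leaving an exponential. -/
lemma bubbleMod_eq {n : ℕ} {ε : ℝ} {w : ℝ → ℝ} (hw : InMh n w) {i : ℕ} (hi : i < n) :
    ∀ x ∈ Ioo ((i : ℝ) / n) (((i : ℝ) + 1) / n),
      bubbleMod n (expBubble n ε) w x = w ((i : ℝ) / n) +
        ((1 + Real.tanh ((1 / (n : ℝ)) / (2 * ε))) / (2 * Real.tanh ((1 / (n : ℝ)) / (2 * ε)))
          * (w (((i : ℝ) + 1) / n) - w ((i : ℝ) / n))) *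
          (1 - Real.exp (-(x - (i : ℝ) / n) / ε)) := by
  intro x hx
  have hn : (0 : ℝ) < n := by exact_mod_cast (Nat.zero_le i).trans_lt hi
  unfold bubbleMod
  rw [Finset.sum_eq_single (i + 1)]
  · unfold bubbleI
    push_cast
    rw [add_sub_cancel_right, if_pos (Ioo_subset_Icc_self hx),
      hw.eq_affine hi x (Ioo_subset_Icc_self hx)]
    unfold expBubble meshSlope
    rw [div_div_eq_mul_div]
    ring
  · intro k _ hk
    unfold bubbleI
    rw [if_neg, mul_zero]
    rintro ⟨h1, h2⟩
    have h1' : (k : ℝ) - 1 < i + 1 :=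
      (div_lt_div_iff_of_pos_right hn).1 (h1.trans_lt hx.2)
    have h2' : (i : ℝ) < k := (div_lt_div_iff_of_pos_right hn).1 (hx.1.trans_le h2)
    have h3 : k < i + 2 := by
      have : (k : ℝ) < i + 2 := by linarith
      exact_mod_cast this
    have h4 : i < k := by exact_mod_cast h2'
    omega
  · intro h
    exact absurd (Finset.mem_Icc.2 ⟨by omega, by omega⟩) h

lemma bubbleMod_deriv {n : ℕ} {ε : ℝ} {w : ℝ → ℝ} (hw : InMh n w) {i : ℕ} (hi : i < n) :
    ∀ x ∈ Ioo ((i : ℝ) / n) (((i : ℝ) + 1) / n),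
      deriv (bubbleMod n (expBubble n ε) w) x =
        ((1 + Real.tanh ((1 / (n : ℝ)) / (2 * ε))) / (2 * Real.tanh ((1 / (n : ℝ)) / (2 * ε)))
          * (w (((i : ℝ) + 1) / n) - w ((i : ℝ) / n))) / ε *
          Real.exp (-(x - (i : ℝ) / n) / ε) := by
  intro x hx
  set D := (1 + Real.tanh ((1 / (n : ℝ)) / (2 * ε))) / (2 * Real.tanh ((1 / (n : ℝ)) / (2 * ε)))
          * (w (((i : ℝ) + 1) / n) - w ((i : ℝ) / n)) with hD
  have hv : HasDerivAt (fun x => w ((i : ℝ) / n) + D * (1 - Real.exp (-(x - (i : ℝ) / n) / ε)))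
      (D / ε * Real.exp (-(x - (i : ℝ) / n) / ε)) x := by
    have h0 : HasDerivAt (fun x : ℝ => -(x - (i : ℝ) / n) / ε) (-1 / ε) x :=
      (((hasDerivAt_id x).sub_const _).neg).div_const ε
    refine (((h0.exp.const_sub 1).const_mul D).const_add (w ((i : ℝ) / n))).congr_deriv ?_
    ring
  refine (hv.congr_of_eventuallyEq ?_).deriv
  filter_upwards [isOpen_Ioo.mem_nhds hx] with y hy
  exact bubbleMod_eq hw hi y hy

/-- Testing the Galerkin relation of the nodal errors `y` with `y` itself gives
`(C - 1/2) ∑ (y (i+1) - y i) ^ 2 = 0`. -/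
lemma nodal_eq_zero {n : ℕ} {y : ℕ → ℝ} {C : ℝ} (hC : 1 / 2 < C) (hy : y 0 = 0) (hyn : y n = 0)
    (h : ∑ i ∈ Finset.range n, (y i + C * (y (i + 1) - y i)) * (y (i + 1) - y i) = 0) :
    ∀ i ≤ n, y i = 0 := by
  have h1 : ∑ i ∈ Finset.range n, (y i + C * (y (i + 1) - y i)) * (y (i + 1) - y i) =
      (C - 1 / 2) * ∑ i ∈ Finset.range n, (y (i + 1) - y i) ^ 2
        + 1 / 2 * ∑ i ∈ Finset.range n, (y (i + 1) ^ 2 - y i ^ 2) := by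
    rw [Finset.mul_sum, Finset.mul_sum, ← Finset.sum_add_distrib]
    exact Finset.sum_congr rfl fun i _ => by ring
  rw [h1, Finset.sum_range_sub (fun i => y i ^ 2), hy, hyn] at h
  have h2 : ∑ i ∈ Finset.range n, (y (i + 1) - y i) ^ 2 = 0 := by
    have : (C - 1 / 2) * ∑ i ∈ Finset.range n, (y (i + 1) - y i) ^ 2 = 0 := by linarith
    exact (mul_eq_zero.1 this).resolve_left (by linarith)
  have h3 := (Finset.sum_eq_zero_iff_of_nonneg fun i _ => sq_nonneg _).1 h2
  intro i
  induction i with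
  | zero => intro _; exact hy
  | succ k ih =>
    intro hk
    have := pow_eq_zero_iff (two_ne_zero) |>.1 (h3 k (Finset.mem_range.2 (by omega)))
    linarith [ih (by omega)]

/-! ### The discrete seminorm -/

lemma sigmaSq_eq {n : ℕ} (hn : 0 < n) (w : ℝ → ℝ) :
    sigmaSq n w = n * ∑ i ∈ Finset.range n,
      (∫ x in ((i : ℝ) / n)..(((i : ℝ) + 1) / n), w x) ^ 2 - (∫ x in (0 : ℝ)..1, w x) ^ 2 := by
  have hn' : (n : ℝ) ≠ 0 := by exact_mod_cast hn.ne'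
  unfold sigmaSq
  simp_rw [mul_pow]
  rw [← Finset.mul_sum]
  field_simp

lemma sigmaSq_nonneg {n : ℕ} (hn : 0 < n) {w : ℝ → ℝ} (hw : ContinuousOn w (Icc 0 1)) :
    0 ≤ sigmaSq n w := by
  rw [sigmaSq_eq hn, integral_eq_sum_mesh hn w (fun _ => w)
    (fun i hi => hw.mono (mesh_subset hi)) (fun _ _ _ _ => rfl), sub_nonneg]
  simpa using sq_sum_le_card_mul_sum_sq (s := Finset.range n)
    (f := fun i : ℕ => ∫ x in ((i : ℝ) / n)..(((i : ℝ) + 1) / n), w x)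

/-- The discrete solution coincides with `u` at every node: the test function is built from the
piecewise linear function `w` whose nodal values are those of `u - uh`. -/
lemma nodal_exact {n : ℕ} (hn : 0 < n) {ε : ℝ} (hε : 0 < ε) {f u u' u'' uh : ℝ → ℝ}
    (huc : ContinuousOn u (Icc 0 1)) (huc' : ContinuousOn u' (Icc 0 1))
    (huc'' : ContinuousOn u'' (Icc 0 1))
    (hd : ∀ x ∈ Ioo (0 : ℝ) 1, HasDerivAt u (u' x) x)
    (hd' : ∀ x ∈ Ioo (0 : ℝ) 1, HasDerivAt u' (u'' x) x)
    (hode : ∀ x ∈ Icc (0 : ℝ) 1, -ε * u'' x + u' x = f x)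
    (hu0 : u 0 = 0) (hu1 : u 1 = 0) (huh : InMh n uh)
    (hupg : ∀ v : ℝ → ℝ,
      (∃ w : ℝ → ℝ, InMh n w ∧ v = bubbleMod n (expBubble n ε) w) →
      ε * (∫ x in (0:ℝ)..1, deriv uh x * deriv v x) +
        (∫ x in (0:ℝ)..1, deriv uh x * v x) = ∫ x in (0:ℝ)..1, f x * v x) :
    ∀ i ≤ n, u ((i : ℝ) / n) = uh ((i : ℝ) / n) := by
  have hn' : (n : ℝ) ≠ 0 := by exact_mod_cast hn.ne'
  have hnpos : (0 : ℝ) < n := by exact_mod_cast hn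
  set t := (1 / (n : ℝ)) / (2 * ε) with ht
  have htpos : 0 < t := by positivity
  have hgpos : 0 < Real.tanh t := by
    rw [Real.tanh_eq_sinh_div_cosh]
    exact div_pos (Real.sinh_pos_iff.2 htpos) (Real.cosh_pos t)
  set C := (1 + Real.tanh t) / (2 * Real.tanh t) with hCdef
  have hCE : C * (1 - Real.exp (-(1 / (n : ℝ)) / ε)) = 1 := by
    have h := bubble_coeff_mul htpos
    have e : -(2 * t) = -(1 / (n : ℝ)) / ε := by rw [ht]; field_simp
    rwa [e] at h
  set y : ℕ → ℝ := fun i => u ((i : ℝ) / n) - uh ((i : ℝ) / n) with hydef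
  have hy0 : y 0 = 0 := by simp [hydef, hu0, huh.2.1]
  have hyn : y n = 0 := by simp [hydef, hn', hu1, huh.2.2.1]
  have key : ∑ i ∈ Finset.range n, (y i + C * (y (i + 1) - y i)) * (y (i + 1) - y i) = 0 := by
    have hw := meshInterp_inMh hn hy0 hyn
    set w := meshInterp n y with hwdef
    have hwn : ∀ i ≤ n, w ((i : ℝ) / n) = y i := fun i hi => meshInterp_node hy0 hn hi
    have h := hupg _ ⟨w, hw, rfl⟩
    set D : ℕ → ℝ := fun i => C * (w (((i : ℝ) + 1) / n) - w ((i : ℝ) / n)) with hDdef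
    rw [integral_eq_sum_mesh hn _ (fun i x => meshSlope n uh i *
        (D i / ε * Real.exp (-(x - (i : ℝ) / n) / ε))) (fun i _ => by fun_prop)
        (fun i hi x hx => by
          rw [(huh.hasDerivAt hi x hx).deriv, bubbleMod_deriv hw hi x hx]),
      integral_eq_sum_mesh hn (fun x => deriv uh x * bubbleMod n (expBubble n ε) w x)
        (fun i x => meshSlope n uh i *
        (w ((i : ℝ) / n) + D i * (1 - Real.exp (-(x - (i : ℝ) / n) / ε))))
        (fun i _ => by fun_prop)
        (fun i hi x hx => by
          rw [(huh.hasDerivAt hi x hx).deriv, bubbleMod_eq hw hi x hx]),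
      integral_eq_sum_mesh hn (fun x => f x * bubbleMod n (expBubble n ε) w x)
        (fun i x => (-ε * u'' x + u' x) *
        (w ((i : ℝ) / n) + D i * (1 - Real.exp (-(x - (i : ℝ) / n) / ε))))
        (fun i hi => by
          have h1 := huc'.mono (mesh_subset hi)
          have h2 := huc''.mono (mesh_subset hi)
          fun_prop)
        (fun i hi x hx => by
          rw [hode x (mesh_subset hi (Ioo_subset_Icc_self hx)), bubbleMod_eq hw hi x hx]),
      Finset.mul_sum, ← Finset.sum_add_distrib] at h
    have hL : ∀ i ∈ Finset.range n,
        ε * (∫ x in ((i : ℝ) / n)..(((i : ℝ) + 1) / n), meshSlope n uh i *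
          (D i / ε * Real.exp (-(x - (i : ℝ) / n) / ε))) +
        (∫ x in ((i : ℝ) / n)..(((i : ℝ) + 1) / n), meshSlope n uh i *
          (w ((i : ℝ) / n) + D i * (1 - Real.exp (-(x - (i : ℝ) / n) / ε)))) = (y i + C * (y (i + 1) - y i)) *
        (uh (((i + 1 : ℕ) : ℝ) / n) - uh ((i : ℝ) / n)) := fun i hi => by
      have hi := Finset.mem_range.1 hi
      have h1 := element_lhs (a := (i : ℝ) / n) (b := ((i : ℝ) + 1) / n) (w₀ := w ((i : ℝ) / n))
        (D := D i) (α := meshSlope n uh i) hε.ne'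
      rw [mesh_length, meshSlope_mul hn] at h1
      rw [h1, hDdef]
      have h2 := hwn (i + 1) hi
      push_cast at h2 ⊢
      simp only [hwn i hi.le, h2]
    have hR : ∀ i ∈ Finset.range n,
        ∫ x in ((i : ℝ) / n)..(((i : ℝ) + 1) / n), (-ε * u'' x + u' x) *
          (w ((i : ℝ) / n) + D i * (1 - Real.exp (-(x - (i : ℝ) / n) / ε))) =
        -ε * (u' (((i + 1 : ℕ) : ℝ) / n) * y (i + 1) - u' ((i : ℝ) / n) * y i) +
        (y i + C * (y (i + 1) - y i)) *
        (u (((i + 1 : ℕ) : ℝ) / n) - u ((i : ℝ) / n)) := fun i hi => by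
      have hi := Finset.mem_range.1 hi
      have hs := mesh_subset hi
      have hs' := mesh_Ioo_subset hi
      have h1 := element_rhs (a := (i : ℝ) / n) (b := ((i : ℝ) + 1) / n) (w₀ := w ((i : ℝ) / n))
        (D := D i) (mesh_lt hn i).le hε.ne' (huc.mono hs) (huc'.mono hs) (huc''.mono hs)
        (fun x hx => hd x (hs' hx)) (fun x hx => hd' x (hs' hx))
      rw [h1, mesh_length]
      have h2 := hwn (i + 1) hi
      push_cast at h2 ⊢
      simp only [hDdef, hwn i hi.le, h2]
      linear_combination (-ε * u' (((i : ℝ) + 1) / n) * (y (i + 1) - y i)) * hCE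
    rw [Finset.sum_congr rfl hL, Finset.sum_congr rfl hR, Finset.sum_add_distrib,
      ← Finset.mul_sum, Finset.sum_range_sub (fun i : ℕ => u' ((i : ℝ) / n) * y i), hy0, hyn] at h
    have h3 : ∑ i ∈ Finset.range n, (y i + C * (y (i + 1) - y i)) * (y (i + 1) - y i) =
        ∑ i ∈ Finset.range n, (y i + C * (y (i + 1) - y i)) *
          (u (((i + 1 : ℕ) : ℝ) / n) - u ((i : ℝ) / n)) -
        ∑ i ∈ Finset.range n, (y i + C * (y (i + 1) - y i)) *
          (uh (((i + 1 : ℕ) : ℝ) / n) - uh ((i : ℝ) / n)) := by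
      rw [← Finset.sum_sub_distrib]
      refine Finset.sum_congr rfl fun i _ => ?_
      rw [← mul_sub]
      congr 1
      simp only [hydef]
      ring
    rw [h3]
    linarith
  intro i hi
  exact sub_eq_zero.1 (nodal_eq_zero (half_lt_bubble_coeff hgpos) hy0 hyn key i hi)

/-! ### The error estimate -/

/-- Quasi-optimal error estimate (in rescaled form) for the
upwinding Petrov-Galerkin discretization with exponential bubble test space of
`-εu'' + u' = f`, `u(0) = u(1) = 0`:
`h²|u-u_h|² + 4g₀²σ(u-u_h)² ≤ (h/(2εg₀))(h²|u-p_h|² + 4g₀²σ(u-p_h)²)`. -/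
theorem stmt19 (n : ℕ) (hn : 2 ≤ n) (ε : ℝ) (hε : 0 < ε)
    (g₀ : ℝ) (hg₀ : g₀ = Real.tanh ((1 / (n : ℝ)) / (2 * ε)))
    (f : ℝ → ℝ) (hf : ContinuousOn f (Set.Icc 0 1))
    (u u' u'' : ℝ → ℝ)
    (hu : ∀ x ∈ Set.Icc (0:ℝ) 1, HasDerivWithinAt u (u' x) (Set.Icc 0 1) x)
    (hu' : ∀ x ∈ Set.Icc (0:ℝ) 1, HasDerivWithinAt u' (u'' x) (Set.Icc 0 1) x)
    (hu'' : ContinuousOn u'' (Set.Icc 0 1))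
    (hode : ∀ x ∈ Set.Icc (0:ℝ) 1, -ε * u'' x + u' x = f x)
    (hu0 : u 0 = 0) (hu1 : u 1 = 0)
    (uh : ℝ → ℝ) (huh : InMh n uh)
    (hupg : ∀ v : ℝ → ℝ,
      (∃ w : ℝ → ℝ, InMh n w ∧ v = bubbleMod n (expBubble n ε) w) →
      ε * (∫ x in (0:ℝ)..1, deriv uh x * deriv v x) +
        (∫ x in (0:ℝ)..1, deriv uh x * v x) = ∫ x in (0:ℝ)..1, f x * v x) :
    ∀ ph : ℝ → ℝ, InMh n ph →
      (1 / (n : ℝ))^2 * (∫ x in (0:ℝ)..1, (u' x - deriv uh x)^2) +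
          4 * g₀^2 * sigmaSq n (fun x => u x - uh x) ≤
        ((1 / (n : ℝ)) / (2 * ε * g₀)) *
          ((1 / (n : ℝ))^2 * (∫ x in (0:ℝ)..1, (u' x - deriv ph x)^2) +
            4 * g₀^2 * sigmaSq n (fun x => u x - ph x)) := by
  intro ph hph
  have hnpos : 0 < n := by omega
  have hn0 : (0 : ℝ) < n := by exact_mod_cast hnpos
  have huc : ContinuousOn u (Icc 0 1) := fun x hx => (hu x hx).continuousWithinAt
  have huc' : ContinuousOn u' (Icc 0 1) := fun x hx => (hu' x hx).continuousWithinAt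
  have hd : ∀ x ∈ Ioo (0 : ℝ) 1, HasDerivAt u (u' x) x := fun x hx =>
    (hu x (Ioo_subset_Icc_self hx)).hasDerivAt (Icc_mem_nhds hx.1 hx.2)
  have hd' : ∀ x ∈ Ioo (0 : ℝ) 1, HasDerivAt u' (u'' x) x := fun x hx =>
    (hu' x (Ioo_subset_Icc_self hx)).hasDerivAt (Icc_mem_nhds hx.1 hx.2)
  have hex := nodal_exact hnpos hε huc huc' hu'' hd hd' hode hu0 hu1 huh hupg
  have hE : ∀ p, InMh n p → ∫ x in (0:ℝ)..1, (u' x - deriv p x) ^ 2 =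
      ∑ i ∈ Finset.range n, ∫ x in ((i : ℝ) / n)..(((i : ℝ) + 1) / n),
        (u' x - meshSlope n p i) ^ 2 := fun p hp =>
    integral_eq_sum_mesh hnpos _ _
      (fun i hi => by
        have h1 := huc'.mono (mesh_subset hi)
        fun_prop)
      (fun i hi x hx => by rw [(hp.hasDerivAt hi x hx).deriv])
  have hopt : ∫ x in (0:ℝ)..1, (u' x - deriv uh x) ^ 2 ≤
      ∫ x in (0:ℝ)..1, (u' x - deriv ph x) ^ 2 := by
    rw [hE uh huh, hE ph hph]
    refine Finset.sum_le_sum fun i hi => ?_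
    have hi := Finset.mem_range.1 hi
    have hs := mesh_subset hi
    refine element_best_approx (mesh_lt hnpos i).le (huc'.mono hs) ?_
    rw [intervalIntegral.integral_eq_sub_of_hasDerivAt_of_le (mesh_lt hnpos i).le (huc.mono hs)
      (fun x hx => hd x (mesh_Ioo_subset hi hx))
      (ContinuousOn.intervalIntegrable (by
        rw [uIcc_of_le (mesh_lt hnpos i).le]; exact huc'.mono hs)),
      mesh_length, meshSlope_mul hnpos, hex i hi.le]
    have := hex (i + 1) hi
    push_cast at this
    rw [this]
  have hsig : sigmaSq n (fun x => u x - uh x) ≤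
      (1 / (n : ℝ)) ^ 2 / 12 * ∫ x in (0:ℝ)..1, (u' x - deriv uh x) ^ 2 := by
    rw [sigmaSq_eq hnpos, hE uh huh]
    have h1 : ∀ i ∈ Finset.range n,
        (∫ x in ((i : ℝ) / n)..(((i : ℝ) + 1) / n), (u x - uh x)) ^ 2 ≤
        (1 / (n : ℝ)) ^ 3 / 12 * ∫ x in ((i : ℝ) / n)..(((i : ℝ) + 1) / n),
          (u' x - meshSlope n uh i) ^ 2 := fun i hi => by
      have hi := Finset.mem_range.1 hi
      have hs := mesh_subset hi
      have h2 := hex (i + 1) hi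
      push_cast at h2
      rw [← mesh_length i]
      exact element_mean_sq_le (mesh_lt hnpos i) ((huc.sub huh.1).mono hs)
        ((huc'.mono hs).sub continuousOn_const)
        (fun x hx => (hd x (mesh_Ioo_subset hi hx)).sub (huh.hasDerivAt hi x hx))
        (sub_eq_zero.2 (hex i hi.le)) (sub_eq_zero.2 h2)
    have h2 := mul_le_mul_of_nonneg_left (Finset.sum_le_sum h1) hn0.le
    rw [← Finset.mul_sum, ← mul_assoc] at h2
    have h3 : (n : ℝ) * ((1 / (n : ℝ)) ^ 3 / 12) = (1 / (n : ℝ)) ^ 2 / 12 := by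
      field_simp
    rw [h3] at h2
    linarith [sq_nonneg (∫ x in (0:ℝ)..1, (u x - uh x))]
  have hsig' : 0 ≤ sigmaSq n (fun x => u x - ph x) := sigmaSq_nonneg hnpos (huc.sub hph.1)
  have hEnn : 0 ≤ ∫ x in (0:ℝ)..1, (u' x - deriv uh x) ^ 2 :=
    intervalIntegral.integral_nonneg zero_le_one (fun x _ => sq_nonneg _)
  have htpos : 0 < (1 / (n : ℝ)) / (2 * ε) := by positivity
  have hgpos : 0 < g₀ := by
    rw [hg₀, Real.tanh_eq_sinh_div_cosh]
    exact div_pos (Real.sinh_pos_iff.2 htpos) (Real.cosh_pos _)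
  have hK : 1 + g₀ ^ 2 / 3 ≤ (1 / (n : ℝ)) / (2 * ε * g₀) := by
    have h := tanh_add_cube_le htpos.le
    rw [← hg₀] at h
    rw [← div_div, le_div_iff₀ hgpos]
    linarith
  have hKpos : 0 ≤ (1 / (n : ℝ)) / (2 * ε * g₀) := by positivity
  generalize (1 / (n : ℝ)) / (2 * ε * g₀) = K at *
  generalize (∫ x in (0:ℝ)..1, (u' x - deriv uh x) ^ 2) = E at *
  generalize (∫ x in (0:ℝ)..1, (u' x - deriv ph x) ^ 2) = P at *
  generalize sigmaSq n (fun x => u x - ph x) = S at *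
  generalize sigmaSq n (fun x => u x - uh x) = T at *
  have hh : 0 ≤ (1 / (n : ℝ)) ^ 2 := by positivity
  generalize (1 / (n : ℝ)) ^ 2 = H at *
  calc H * E + 4 * g₀ ^ 2 * T ≤ H * E + 4 * g₀ ^ 2 * (H / 12 * E) := by gcongr
    _ = (1 + g₀ ^ 2 / 3) * (H * E) := by ring
    _ ≤ K * (H * P) := by gcongr
    _ ≤ K * (H * P + 4 * g₀ ^ 2 * S) := by
      gcongr
      have : 0 ≤ 4 * g₀ ^ 2 * S := by positivity
      linarith
end
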